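/- Let d ≥ 1, let n : ℝ^d → ℝ be a C^∞ function with n(x) > 0 for every x, and let φ : ℝ^d → ℝ^d be a C^∞ compactly supported vector field. Then ∫_{ℝ^d} n ∇( Δ√n / √n ) · φ dx = ∫_{ℝ^d} √n ∇√n · ∇( div φ ) dx + 2 ∫_{ℝ^d} Σ_{i,j} ( ∂_i √n · ∂_j √n ) ∂_i φ_j dx. -/

import Mathlib

open MeasureTheory

/-- The `i`-th partial derivative of `f : ℝ^d → ℝ`. -/
noncomputable def pd {d : ℕ} (i : Fin d) (f : (Fin d → ℝ) → ℝ) (x : Fin d → ℝ) : ℝ :=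
  fderiv ℝ f x (Pi.single i 1)

lemma pd_smooth {d : ℕ} (i : Fin d) {f : (Fin d → ℝ) → ℝ} (hf : ContDiff ℝ (⊤ : ℕ∞) f) :
    ContDiff ℝ (⊤ : ℕ∞) (pd i f) := by
  unfold pd
  exact (hf.fderiv_right (m := (⊤ : ℕ∞)) (by simp)).clm_apply contDiff_const

lemma smooth_diff {d : ℕ} {f : (Fin d → ℝ) → ℝ} (hf : ContDiff ℝ (⊤ : ℕ∞) f) :
    Differentiable ℝ f := hf.differentiable (by simp)

lemma pd_add {d : ℕ} (i : Fin d) {f g : (Fin d → ℝ) → ℝ} (hf : ContDiff ℝ (⊤ : ℕ∞) f)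
    (hg : ContDiff ℝ (⊤ : ℕ∞) g) (x) :
    pd i (fun y => f y + g y) x = pd i f x + pd i g x := by
  unfold pd
  rw [fderiv_fun_add (smooth_diff hf x) (smooth_diff hg x)]
  rfl

lemma pd_mul {d : ℕ} (i : Fin d) {f g : (Fin d → ℝ) → ℝ} (hf : ContDiff ℝ (⊤ : ℕ∞) f)
    (hg : ContDiff ℝ (⊤ : ℕ∞) g) (x) :
    pd i (fun y => f y * g y) x = f x * pd i g x + g x * pd i f x := by
  unfold pd
  rw [fderiv_fun_mul (smooth_diff hf x) (smooth_diff hg x)]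
  simp

lemma pd_sum {d : ℕ} (i : Fin d) {f : Fin d → (Fin d → ℝ) → ℝ}
    (hf : ∀ j, ContDiff ℝ (⊤ : ℕ∞) (f j)) (x) :
    pd i (fun y => ∑ j, f j y) x = ∑ j, pd i (f j) x := by
  unfold pd
  rw [fderiv_fun_sum (fun j _ => smooth_diff (hf j) x)]
  simp

lemma pd_comm {d : ℕ} (i j : Fin d) {f : (Fin d → ℝ) → ℝ} (hf : ContDiff ℝ (⊤ : ℕ∞) f) (x) :
    pd i (pd j f) x = pd j (pd i f) x := by
  have h2 : Differentiable ℝ (fderiv ℝ f) :=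
    (hf.fderiv_right (m := (⊤ : ℕ∞)) (by simp)).differentiable (by simp)
  have key : ∀ a b : Fin d, pd a (pd b f) x =
      fderiv ℝ (fderiv ℝ f) x (Pi.single a 1) (Pi.single b 1) := by
    intro a b
    change fderiv ℝ (fun y => fderiv ℝ f y (Pi.single b 1)) x (Pi.single a 1) = _
    rw [fderiv_clm_apply (h2 x) (differentiableAt_const _)]
    simp
  rw [key, key]
  exact second_derivative_symmetric (fun y => (smooth_diff hf y).hasFDerivAt)
    (h2 x).hasFDerivAt _ _

lemma pd_compact {d : ℕ} (i : Fin d) {f : (Fin d → ℝ) → ℝ} (hf : HasCompactSupport f) :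
    HasCompactSupport (pd i f) := hf.fderiv_apply (𝕜 := ℝ) _

lemma int_mul {d : ℕ} {f g : (Fin d → ℝ) → ℝ} (hf : ContDiff ℝ (⊤ : ℕ∞) f)
    (hg : ContDiff ℝ (⊤ : ℕ∞) g) (hc : HasCompactSupport g) :
    Integrable (fun x => f x * g x) :=
  (hf.continuous.mul hg.continuous).integrable_of_hasCompactSupport hc.mul_left

lemma ibp {d : ℕ} (i : Fin d) {f g : (Fin d → ℝ) → ℝ} (hf : ContDiff ℝ (⊤ : ℕ∞) f)
    (hg : ContDiff ℝ (⊤ : ℕ∞) g) (hc : HasCompactSupport g) :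
    ∫ x, f x * pd i g x = - ∫ x, pd i f x * g x :=
  integral_mul_fderiv_eq_neg_fderiv_mul_of_integrable
    (int_mul (pd_smooth i hf) hg hc)
    (int_mul hf (pd_smooth i hg) (pd_compact i hc))
    (int_mul hf hg hc) (fun x _ => smooth_diff hf x) (fun x _ => smooth_diff hg x)

/-- The identity for one pair of indices. -/
lemma pair_id {d : ℕ} (i j : Fin d) {r g : (Fin d → ℝ) → ℝ} (hr : ContDiff ℝ (⊤ : ℕ∞) r)
    (hg : ContDiff ℝ (⊤ : ℕ∞) g) (hc : HasCompactSupport g) :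
    ∫ x, (r x * pd j (pd i (pd i r)) x - pd i (pd i r) x * pd j r x) * g x
      = (∫ x, (r x * pd i r x) * pd i (pd j g) x)
        + 2 * ∫ x, (pd i r x * pd j r x) * pd i g x := by
  have hi := pd_smooth i hr
  have hj := pd_smooth j hr
  have hii := pd_smooth i hi
  have e1 : pd i (fun y => r y * pd i r y)
      = fun x => r x * pd i (pd i r) x + pd i r x * pd i r x := by
    funext x; rw [pd_mul i hr hi]
  have e2 : pd j (fun x => r x * pd i (pd i r) x + pd i r x * pd i r x)
      = fun x => r x * pd j (pd i (pd i r)) x + pd i (pd i r) x * pd j r x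
          + 2 * (pd i r x * pd j (pd i r) x) := by
    funext x
    rw [pd_add j (hr.mul hii) (hi.mul hi), pd_mul j hr hii, pd_mul j hi hi]; ring
  have e3 : pd i (fun y => pd i r y * pd j r y)
      = fun x => pd i r x * pd j (pd i r) x + pd j r x * pd i (pd i r) x := by
    funext x; rw [pd_mul i hi hj, pd_comm i j hr]
  have hA : ContDiff ℝ (⊤ : ℕ∞) (fun x => r x * pd i (pd i r) x + pd i r x * pd i r x) :=
    (hr.mul hii).add (hi.mul hi)
  have hB : ContDiff ℝ (⊤ : ℕ∞) (fun y => pd i r y * pd j r y) := hi.mul hj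
  have I1 := int_mul (pd_smooth j hA) hg hc
  have I2 := int_mul (pd_smooth i hB) hg hc
  rw [ibp i (hr.mul hi) (pd_smooth j hg) (pd_compact j hc), e1, ibp j hA hg hc,
    ibp i hB hg hc, neg_neg, mul_neg, ← sub_eq_add_neg, ← integral_const_mul,
    ← integral_sub I1 (I2.const_mul 2), e2, e3]
  congr 1; funext x; ring

/-- Weak form of the quantum term: for smooth positive `n` and a smooth compactly
supported vector field `φ`,
`∫ n ∇(Δ√n/√n) · φ = ∫ √n ∇√n · ∇(div φ) + 2 ∫ ∇√n ⊗ ∇√n : ∇φ`. -/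
theorem quantum_term_weak_form (d : ℕ) (hd : 1 ≤ d) (n : (Fin d → ℝ) → ℝ)
    (hn : ContDiff ℝ (⊤ : ℕ∞) n) (hpos : ∀ x, 0 < n x)
    (φ : (Fin d → ℝ) → Fin d → ℝ) (hφ : ContDiff ℝ (⊤ : ℕ∞) φ)
    (hφc : HasCompactSupport φ) :
    (∫ x : Fin d → ℝ, ∑ i : Fin d,
        n x * pd i (fun y =>
          (∑ j : Fin d, pd j (pd j (fun z => Real.sqrt (n z))) y) / Real.sqrt (n y)) x
          * φ x i)
      = (∫ x : Fin d → ℝ, ∑ i : Fin d,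
          Real.sqrt (n x) * pd i (fun z => Real.sqrt (n z)) x
            * pd i (fun y => ∑ j : Fin d, pd j (fun z => φ z j) y) x)
        + 2 * ∫ x : Fin d → ℝ, ∑ i : Fin d, ∑ j : Fin d,
            pd i (fun z => Real.sqrt (n z)) x * pd j (fun z => Real.sqrt (n z)) x
              * pd i (fun y => φ y j) x := by
  have hr : ContDiff ℝ (⊤ : ℕ∞) (fun z => Real.sqrt (n z)) := hn.sqrt (fun x => (hpos x).ne')
  have hrp : ∀ x, 0 < Real.sqrt (n x) := fun x => Real.sqrt_pos.2 (hpos x)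
  have hnr : ∀ x, n x = Real.sqrt (n x) * Real.sqrt (n x) :=
    fun x => (Real.mul_self_sqrt (hpos x).le).symm
  have hnr' : ∀ x, n x = (fun z => Real.sqrt (n z)) x * (fun z => Real.sqrt (n z)) x := hnr
  have hrp' : ∀ x, 0 < (fun z => Real.sqrt (n z)) x := hrp
  change (∫ x : Fin d → ℝ, ∑ i : Fin d,
        n x * pd i (fun y =>
          (∑ j : Fin d, pd j (pd j (fun z => Real.sqrt (n z))) y)
            / (fun z => Real.sqrt (n z)) y) x * φ x i)
      = (∫ x : Fin d → ℝ, ∑ i : Fin d,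
          (fun z => Real.sqrt (n z)) x * pd i (fun z => Real.sqrt (n z)) x
            * pd i (fun y => ∑ j : Fin d, pd j (fun z => φ z j) y) x) + _
  generalize (fun z => Real.sqrt (n z)) = r at *
  have hg : ∀ j, ContDiff ℝ (⊤ : ℕ∞) (fun z => φ z j) := fun j => contDiff_pi.1 hφ j
  have hc : ∀ j, HasCompactSupport (fun z => φ z j) := fun j =>
    hφc.comp_left (g := fun v : Fin d → ℝ => v j) rfl
  have hi := fun i => pd_smooth i hr
  have hii := fun i => pd_smooth i (hi i)
  have hL : ContDiff ℝ (⊤ : ℕ∞) (fun y => ∑ j : Fin d, pd j (pd j r) y) :=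
    ContDiff.sum fun j _ => hii j
  have hq : ContDiff ℝ (⊤ : ℕ∞) (fun y => (∑ j : Fin d, pd j (pd j r) y) / r y) :=
    hL.div hr (fun x => (hrp' x).ne')
  have quot : ∀ i x, n x * pd i (fun y => (∑ j : Fin d, pd j (pd j r) y) / r y) x
      = ∑ j, (r x * pd i (pd j (pd j r)) x - pd j (pd j r) x * pd i r x) := by
    intro i x
    have h1 := pd_mul i hr hq x
    have h2 : (fun y => r y * ((∑ j : Fin d, pd j (pd j r) y) / r y))
        = fun y => ∑ j : Fin d, pd j (pd j r) y := by
      funext y; exact mul_div_cancel₀ _ (hrp' y).ne'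
    rw [h2, pd_sum i hii] at h1
    rw [Finset.sum_sub_distrib, ← Finset.mul_sum, ← Finset.sum_mul, h1, hnr' x]
    have := (hrp' x).ne'
    field_simp
    ring
  have L : ∀ x, (∑ i : Fin d, n x * pd i (fun y => (∑ j : Fin d, pd j (pd j r) y) / r y) x
        * φ x i) = ∑ i, ∑ j, (r x * pd j (pd i (pd i r)) x - pd i (pd i r) x * pd j r x)
          * φ x j := by
    intro x
    rw [Finset.sum_comm]
    refine Finset.sum_congr rfl fun i _ => ?_
    rw [quot, Finset.sum_mul]
  have R : ∀ x, (∑ i : Fin d, r x * pd i r x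
        * pd i (fun y => ∑ j : Fin d, pd j (fun z => φ z j) y) x)
      = ∑ i, ∑ j, (r x * pd i r x) * pd i (pd j (fun z => φ z j)) x := by
    intro x
    refine Finset.sum_congr rfl fun i _ => ?_
    rw [pd_sum i (fun j => pd_smooth j (hg j)), Finset.mul_sum]
  simp only [L, R]
  have J1 : ∀ i j, Integrable (fun x =>
      (r x * pd j (pd i (pd i r)) x - pd i (pd i r) x * pd j r x) * φ x j) := fun i j =>
    int_mul ((hr.mul (pd_smooth j (hii i))).sub ((hii i).mul (hi j))) (hg j) (hc j)
  have J2 : ∀ i j, Integrable (fun x =>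
      (r x * pd i r x) * pd i (pd j (fun z => φ z j)) x) := fun i j =>
    int_mul (hr.mul (hi i)) (pd_smooth i (pd_smooth j (hg j)))
      (pd_compact i (pd_compact j (hc j)))
  have J3 : ∀ i j, Integrable (fun x =>
      (pd i r x * pd j r x) * pd i (fun z => φ z j) x) := fun i j =>
    int_mul ((hi i).mul (hi j)) (pd_smooth i (hg j)) (pd_compact i (hc j))
  have swap : ∀ F : Fin d → Fin d → (Fin d → ℝ) → ℝ, (∀ i j, Integrable (F i j)) →
      ∫ x, ∑ i, ∑ j, F i j x = ∑ i, ∑ j, ∫ x, F i j x := by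
    intro F hF
    rw [integral_finsetSum _ (fun i _ => integrable_finsetSum _ (fun j _ => hF i j))]
    exact Finset.sum_congr rfl fun i _ => integral_finsetSum _ (fun j _ => hF i j)
  rw [swap _ J1, swap _ J2, swap _ J3]
  simp only [Finset.mul_sum, ← Finset.sum_add_distrib]
  exact Finset.sum_congr rfl fun i _ => Finset.sum_congr rfl fun j _ =>
    pair_id i j hr (hg j) (hc j)
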